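/- Let n be an even positive integer and let f : F → 𝔽₂ be defined by f(x) = tr(x^7). If 3 does not divide n, then nl₂(f) ≥ 2^{n−1} − (1/2)·√((13/3)·2^{3n/2 − 1} + 2^n − (1/3)·2^{n/2 + 3}); if 3 divides n, then nl₂(f) ≥ 2^{n−1} − (1/2)·√((13/3)·2^{3n/2 − 1} + 2^{n+2} − (1/3)·2^{n/2 + 3}). -/

import Mathlib

noncomputable section

/-- `Fq n` is the finite field with `2 ^ n` elements. -/
abbrev Fq (n : ℕ) : Type := GaloisField 2 n

/-- The absolute trace map `tr x = x + x^2 + x^4 + ⋯ + x^(2^(n-1))` from `Fq n` to `𝔽₂`. -/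
def tr {n : ℕ} (x : Fq n) : ZMod 2 := Algebra.trace (ZMod 2) (Fq n) x

/-- The derivative of `f` with respect to `a`. -/
def der {n : ℕ} (f : Fq n → ZMod 2) (a : Fq n) : Fq n → ZMod 2 :=
  fun x => f x + f (x + a)

/-- Iterated derivatives along a list of directions (head applied last/outermost). -/
def derIter {n : ℕ} (f : Fq n → ZMod 2) : List (Fq n) → (Fq n → ZMod 2)
  | [] => f
  | a :: as => der (derIter f as) a

/-- `g` has algebraic degree at most `r`: all `(r+1)`-th order derivatives vanish. -/
def degLE {n : ℕ} (g : Fq n → ZMod 2) (r : ℕ) : Prop :=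
  ∀ l : List (Fq n), l.length = r + 1 → derIter g l = fun _ => 0

/-- Hamming distance between two Boolean functions on `Fq n`. -/
def hdist {n : ℕ} (f g : Fq n → ZMod 2) : ℕ :=
  {x : Fq n | f x ≠ g x}.ncard

/-- The `r`-th order nonlinearity of `f`. -/
def nl {n : ℕ} (r : ℕ) (f : Fq n → ZMod 2) : ℕ :=
  sInf {d : ℕ | ∃ g : Fq n → ZMod 2, degLE g r ∧ d = hdist f g}

/-- The linear kernel of `f`: directions along which the derivative is constant. -/
def linKer {n : ℕ} (f : Fq n → ZMod 2) : Set (Fq n) :=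
  {b | ∃ c : ZMod 2, ∀ x, der f b x = c}

/-- The weight of a Boolean function on `Fq n`. -/
def wt {n : ℕ} (f : Fq n → ZMod 2) : ℕ := {x : Fq n | f x = 1}.ncard

/-!
For a Boolean function `h`, the square of `bias h` is the sum of the biases of the derivatives of
`h`. Apply this to `h = tr (x ^ 7) + g` with `g` of degree at most two: each derivative `D_a h` is
quadratic, so the square of its bias is at most `2 ^ n` times the size of its linear kernel, and
this kernel does not depend on `g`, because `g` disappears in third derivatives. For `a ≠ 0` the
kernel is the set of roots `b` of `kernelForm a b`, a polynomial in `y = (b / a) ^ 2 + b / a`,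
which has trace zero. It has at most four elements, unless `1 / a ^ 7` has cube roots and all of
them have trace zero, in which case it has at most sixteen.

To count these exceptional `a`, write `a * e ^ 3 = 1`. The cube roots of `1 / a ^ 7` are then
`e ^ 7`, `w * e ^ 7` and `w ^ 2 * e ^ 7` with `w` a primitive cube root of unity, which exists as
`n` is even, and each `a` arises from three values of `e`. Detecting the condition
`tr (e ^ 7) = tr (w * e ^ 7) = 0` by characters expresses the number of such `e` through the bias of
`tr (x ^ 7)` itself, and that bias is at most `(gcd (2 ^ n - 1, 7) - 1) * √(2 ^ n)` by a Weil-type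
bound for monomials, which only needs the Cauchy-Schwarz inequality.
-/

section PowerSums

open Finset

lemma sum_eq_zero_add_sum_units {F M : Type*} [GroupWithZero F] [Fintype F] [DecidableEq F]
    [AddCommMonoid M] (g : F → M) : ∑ x, g x = g 0 + ∑ u : Fˣ, g u := by
  rw [← add_sum_erase univ g (mem_univ 0)]
  congr 1
  refine (sum_bij (fun (u : Fˣ) _ => (u : F)) (by simp) (by simp [Units.ext_iff]) ?_
    (by simp)).symm
  exact fun x hx => ⟨Units.mk0 x (ne_of_mem_erase hx), mem_univ _, rfl⟩

lemma card_filter_pow_eq_pow {G : Type*} [CommGroup G] [IsCyclic G] [Fintype G] [DecidableEq G]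
    (k : ℕ) (h : G) : #{g : G | g ^ k = h ^ k} = (Fintype.card G).gcd k := by
  have hfiber := MonoidHom.card_fiber_eq_of_mem_range (powMonoidHom k : G →* G)
    (Set.mem_range_self h) (Set.mem_range_self 1)
  have hker := IsCyclic.card_powMonoidHom_ker (G := G) k
  rw [Nat.card_eq_fintype_card, Nat.card_eq_fintype_card] at hker
  simp only [powMonoidHom_apply, one_pow] at hfiber
  rw [hfiber, ← hker, ← Fintype.card_subtype]
  exact Fintype.card_congr (Equiv.refl _)

lemma sum_card_pow_fiber_sub_one_sq {G : Type*} [CommGroup G] [IsCyclic G] [Fintype G]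
    [DecidableEq G] (k : ℕ) :
    ∑ h : G, ((#{g : G | g ^ k = h} : ℝ) - 1) ^ (2 : ℕ) =
      Fintype.card G * ((Fintype.card G).gcd k - 1) := by
  have hexpand (h : G) : ((#{g : G | g ^ k = h} : ℝ) - 1) ^ 2 =
      ∑ g : G with g ^ k = h, ((#{x : G | x ^ k = h} : ℝ) - 2) + 1 := by
    rw [sum_const, nsmul_eq_mul]; ring
  have htransfer : ∑ h : G, ∑ g : G with g ^ k = h, ((#{x : G | x ^ k = h} : ℝ) - 2) =
      ∑ g : G, ((#{x : G | x ^ k = g ^ k} : ℝ) - 2) :=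
    sum_fiberwise' univ (· ^ k) fun h => (#{x : G | x ^ k = h} : ℝ) - 2
  rw [sum_congr rfl fun h _ => hexpand h, sum_add_distrib, htransfer]
  simp only [card_filter_pow_eq_pow, sum_const, card_univ, nsmul_eq_mul]
  ring

variable {𝕜 F : Type*} [RCLike 𝕜] [Field F] [Fintype F]

section DecidableEq

variable [DecidableEq F]

lemma sum_sum_mul_eq_card_mul {α : Type*} [Fintype α] {ψ : AddChar F 𝕜} (hψ : ψ.IsPrimitive)
    (φ : α → F) :
    ∑ u, ∑ x, ψ (u * φ x) = Fintype.card F * #{x | φ x = 0} := by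
  rw [sum_comm]
  simp only [AddChar.sum_mulShift _ hψ]
  simp [← sum_filter, mul_comm]

lemma sum_norm_sum_mul_sq {α : Type*} [Fintype α] {ψ : AddChar F 𝕜} (hψ : ψ.IsPrimitive)
    (φ : α → F) :
    ∑ u, ‖∑ x, ψ (u * φ x)‖ ^ 2 = Fintype.card F * ∑ y, (#{x | φ x = φ y} : ℝ) := by
  have hsq (u : F) :
      ((‖∑ x, ψ (u * φ x)‖ ^ 2 : ℝ) : 𝕜) = ∑ p : α × α, ψ (u * (φ p.2 - φ p.1)) := by
    rw [RCLike.ofReal_pow, ← RCLike.conj_mul, map_sum, sum_mul_sum, ← sum_product']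
    refine sum_congr rfl fun p _ => ?_
    rw [← AddChar.map_neg_eq_conj, ← AddChar.map_add_eq_mul]
    congr 1; ring
  have hpairs : (#{p : α × α | φ p.2 - φ p.1 = 0} : ℝ) = ∑ y, (#{x | φ x = φ y} : ℝ) := by
    simp only [sub_eq_zero, card_filter, Nat.cast_sum, ← univ_product_univ, sum_product]
  have h := sum_sum_mul_eq_card_mul hψ fun p : α × α => φ p.2 - φ p.1
  simp only [← hsq] at h
  rw [← hpairs]
  exact_mod_cast h

lemma card_filter_pow_eq_pow_of_ne_zero {a : F} (ha : a ≠ 0) {k : ℕ} (hk : k ≠ 0) :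
    #{x : F | x ^ k = a ^ k} = (Fintype.card F - 1).gcd k := by
  rw [← Fintype.card_units, ← card_filter_pow_eq_pow k (Units.mk0 a ha)]
  refine (card_bij (fun (u : Fˣ) _ => (u : F)) ?_ (by simp [Units.ext_iff]) ?_).symm
  · simp [Units.ext_iff]
  · intro x hx
    simp only [mem_filter_univ] at hx
    have hx0 : x ≠ 0 := by rintro rfl; simp [hk, ha, eq_comm] at hx
    exact ⟨Units.mk0 x hx0, by simpa [Units.ext_iff] using hx, rfl⟩

lemma sum_units_sum_mul_pow {ψ : AddChar F 𝕜} (hψ : ψ.IsPrimitive) {k : ℕ} (hk : k ≠ 0) :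
    ∑ u : Fˣ, ∑ x, ψ (u * x ^ k) = 0 := by
  have h := sum_sum_mul_eq_card_mul hψ fun x : F => x ^ k
  rw [sum_eq_zero_add_sum_units] at h
  simpa [pow_eq_zero_iff hk, filter_eq'] using h

lemma sum_units_norm_sum_mul_pow_sq {ψ : AddChar F 𝕜} (hψ : ψ.IsPrimitive) {k : ℕ} (hk : k ≠ 0) :
    ∑ u : Fˣ, ‖∑ x, ψ (u * x ^ k)‖ ^ 2 =
      Fintype.card F * Fintype.card Fˣ * ((Fintype.card Fˣ).gcd k - 1 : ℝ) := by
  have hq : (Fintype.card F : ℝ) = Fintype.card Fˣ + 1 := by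
    exact_mod_cast (Fintype.card_eq_card_units_add_one (α := F))
  have h := sum_norm_sum_mul_sq hψ fun x : F => x ^ k
  have hfiber (u : Fˣ) : #{x : F | x ^ k = (u : F) ^ k} = (Fintype.card Fˣ).gcd k := by
    rw [card_filter_pow_eq_pow_of_ne_zero u.ne_zero hk, Fintype.card_units]
  have hfiber0 : #{x : F | x ^ k = 0 ^ k} = 1 := by
    simp [zero_pow hk, pow_eq_zero_iff hk, filter_eq']
  rw [sum_eq_zero_add_sum_units, sum_eq_zero_add_sum_units (fun y : F => (_ : ℝ))] at h
  simp only [hfiber, hfiber0, zero_mul, AddChar.map_zero_eq_one, sum_const, card_univ, nsmul_eq_mul,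
    mul_one, RCLike.norm_natCast, Nat.cast_one] at h
  rw [hq] at h ⊢
  linear_combination h

end DecidableEq

theorem norm_sum_addChar_pow_le {ψ : AddChar F 𝕜} (hψ : ψ.IsPrimitive) {k : ℕ} (hk : k ≠ 0) :
    ‖∑ x, ψ (x ^ k)‖ ≤ ((Fintype.card F - 1).gcd k - 1) * √(Fintype.card F) := by
  classical
  rw [← Fintype.card_units]
  set N : ℝ := (Fintype.card Fˣ : ℝ) with hN
  set r : ℝ := ((Fintype.card Fˣ).gcd k : ℝ) with hr
  set S : F → 𝕜 := fun u => ∑ x, ψ (u * x ^ k) with hS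
  let M : Fˣ → ℝ := fun u => #{v : Fˣ | v ^ k = u}
  have hN0 : 0 < N := by rw [hN]; exact_mod_cast Fintype.card_pos
  have hr1 : 1 ≤ r := by
    rw [hr]; exact_mod_cast Nat.gcd_pos_of_pos_right _ (Nat.pos_of_ne_zero hk)
  have hS_pow (v : Fˣ) : S ↑(v ^ k) = S 1 := by
    simp only [hS, Units.val_pow_eq_pow_val, ← mul_pow, one_mul]
    exact Equiv.sum_comp v.mulLeft fun x => ψ (x ^ k)
  have hS_sum : ∑ u : Fˣ, S u = 0 := sum_units_sum_mul_pow hψ hk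
  -- Since `S` sums to zero, subtracting `1` from the weights is free; it improves the factor
  -- `√(r * (r - 1))` to `r - 1`.
  have hM_sum : ∑ u : Fˣ, ((M u - 1 : ℝ) : 𝕜) * S u = N * S 1 := by
    have h := sum_fiberwise' univ (fun v : Fˣ => v ^ k) fun u => S u
    simp only [hS_pow, sum_const, card_univ, nsmul_eq_mul] at h
    simp [sub_mul, hS_sum, M, hN, h]
  have hCS : (N * ‖S 1‖) ^ 2 ≤ (N * (r - 1)) ^ 2 * Fintype.card F :=
    calc (N * ‖S 1‖) ^ 2 = ‖∑ u : Fˣ, ((M u - 1 : ℝ) : 𝕜) * S u‖ ^ 2 := by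
          rw [hM_sum, norm_mul, RCLike.norm_ofReal, abs_of_pos hN0]
      _ ≤ (∑ u : Fˣ, |M u - 1| * ‖S u‖) ^ 2 := by
          gcongr
          exact (norm_sum_le _ _).trans_eq <| sum_congr rfl fun u _ => by
            rw [norm_mul, RCLike.norm_ofReal]
      _ ≤ (∑ u : Fˣ, |M u - 1| ^ 2) * ∑ u : Fˣ, ‖S u‖ ^ 2 := sum_mul_sq_le_sq_mul_sq _ _ _
      _ = (N * (r - 1)) ^ 2 * Fintype.card F := by
          simp only [sq_abs, M, hS, sum_card_pow_fiber_sub_one_sq,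
            sum_units_norm_sum_mul_pow_sq hψ hk]
          ring
  have hroot := Real.abs_le_sqrt hCS
  rw [Real.sqrt_mul (sq_nonneg _), Real.sqrt_sq (by nlinarith), abs_of_nonneg (by positivity),
    mul_assoc] at hroot
  simpa [hS] using le_of_mul_le_mul_left hroot hN0

end PowerSums

section BooleanFunctions

open Finset

instance (n : ℕ) : Fintype (Fq n) := Fintype.ofFinite _

instance (n : ℕ) : DecidableEq (Fq n) := Classical.decEq _

lemma card_Fq {n : ℕ} (hn : n ≠ 0) : Fintype.card (Fq n) = 2 ^ n := by
  rw [← Nat.card_eq_fintype_card, GaloisField.card 2 n hn]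

/-- The sign character `z ↦ (-1) ^ z` of `𝔽₂`. -/
def signChar : AddChar (ZMod 2) ℝ := AddChar.zmodChar 2 neg_one_sq

lemma signChar_one : signChar 1 = -1 := by
  simp [signChar, AddChar.zmodChar_apply, ZMod.val_one]

lemma signChar_eq_ite (z : ZMod 2) : signChar z = if z = 0 then 1 else -1 := by
  fin_cases z
  · exact signChar.map_zero_eq_one
  · exact signChar_one

variable {n : ℕ}

/-- The exponential sum `∑ (-1) ^ f x`, which is the Walsh coefficient of `f` at `0`. It measures
how far `f` is from being balanced. -/
def bias (f : Fq n → ZMod 2) : ℝ := ∑ x, signChar (f x)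

lemma bias_le_card (f : Fq n → ZMod 2) : bias f ≤ Fintype.card (Fq n) := by
  refine (sum_le_card_nsmul univ _ 1 fun x _ => ?_).trans_eq (by simp)
  rw [signChar_eq_ite]
  split_ifs <;> norm_num

lemma bias_add_eq_card_sub_hdist (f g : Fq n → ZMod 2) :
    bias (f + g) = Fintype.card (Fq n) - 2 * hdist f g := by
  have hsign (x : Fq n) : signChar ((f + g) x) = 1 - 2 * if f x ≠ g x then 1 else 0 := by
    simp only [signChar_eq_ite, Pi.add_apply, CharTwo.add_eq_zero, ne_eq, ite_not]
    split_ifs <;> norm_num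
  have hcard : hdist f g = #{x | f x ≠ g x} := by
    rw [hdist, ← Set.ncard_coe_finset, coe_filter_univ]
  simp only [bias, hsign, sum_sub_distrib, ← mul_sum, sum_boole, hcard]
  simp

lemma bias_sq (f : Fq n → ZMod 2) : bias f ^ 2 = ∑ a, bias (der f a) := by
  simp only [bias, der, AddChar.map_add_eq_mul]
  rw [sum_comm, sq, sum_mul]
  refine sum_congr rfl fun x _ => ?_
  rw [← mul_sum]
  congr 1
  exact (Equiv.sum_comp (Equiv.addLeft x) fun y => signChar (f y)).symm

lemma bias_eq_zero_of_der_eq_one {f : Fq n → ZMod 2} {c : Fq n} (h : ∀ x, der f c x = 1) :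
    bias f = 0 := by
  have hshift (x : Fq n) : signChar (f (x + c)) = -signChar (f x) := by
    have hx : f (x + c) = f x + 1 := by
      rw [← h x, der, ← add_assoc, CharTwo.add_self_eq_zero, zero_add]
    rw [hx, AddChar.map_add_eq_mul, signChar_one, mul_neg_one]
  have hneg : bias f = -bias f := by
    calc bias f = ∑ x, signChar (f (x + c)) :=
          (Equiv.sum_comp (Equiv.addRight c) fun x => signChar (f x)).symm
      _ = -bias f := by simp only [hshift, sum_neg_distrib, bias]
  linarith

lemma der_add (f g : Fq n → ZMod 2) (a : Fq n) : der (f + g) a = der f a + der g a := by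
  funext x
  simp only [der, Pi.add_apply]
  ring

lemma der_zero (a : Fq n) : der (0 : Fq n → ZMod 2) a = 0 := by
  funext x
  simp [der]

lemma derIter_add (f g : Fq n → ZMod 2) (l : List (Fq n)) :
    derIter (f + g) l = derIter f l + derIter g l := by
  induction l with
  | nil => rfl
  | cons a l ih => rw [derIter, ih, der_add]; rfl

lemma derIter_der (f : Fq n → ZMod 2) (a : Fq n) (l : List (Fq n)) :
    derIter (der f a) l = derIter f (l ++ [a]) := by
  induction l with
  | nil => rfl
  | cons b l ih => rw [derIter, ih]; rfl

lemma degLE_zero (r : ℕ) : degLE (0 : Fq n → ZMod 2) r := by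
  suffices h : ∀ l, derIter (0 : Fq n → ZMod 2) l = 0 from fun l _ => h l
  intro l
  induction l with
  | nil => rfl
  | cons a l ih => rw [derIter, ih, der_zero]

lemma degLE_add {f g : Fq n → ZMod 2} {r : ℕ} (hf : degLE f r) (hg : degLE g r) :
    degLE (f + g) r := by
  intro l hl
  rw [derIter_add, hf l hl, hg l hl]
  exact add_zero 0

lemma degLE_succ {f : Fq n → ZMod 2} {r : ℕ} (hf : degLE f r) : degLE f (r + 1)
  | a :: l, hl => by
    rw [derIter, hf l (by simpa using hl)]
    exact der_zero a

lemma degLE_der {f : Fq n → ZMod 2} {r : ℕ} (hf : degLE f (r + 1)) (a : Fq n) :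
    degLE (der f a) r := by
  intro l hl
  rw [derIter_der]
  exact hf _ (by simp [hl])

lemma mem_linKer_iff {f : Fq n → ZMod 2} {b : Fq n} :
    b ∈ linKer f ↔ ∀ c x, der (der f b) c x = 0 := by
  simp only [der, CharTwo.add_eq_zero]
  refine ⟨fun ⟨z, hz⟩ c x => (hz x).trans (hz (x + c)).symm, fun h => ⟨der f b 0, fun x => ?_⟩⟩
  simpa [der] using (h x 0).symm

lemma der_der_const_of_degLE_two {f : Fq n → ZMod 2} (hf : degLE f 2) (b c x : Fq n) :
    der (der f b) c x = der (der f b) c 0 := by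
  have h := congrFun (hf [x, c, b] rfl) 0
  rw [derIter, der, CharTwo.add_eq_zero, zero_add] at h
  exact h.symm

lemma bias_sq_le_card_mul_ncard_linKer {f : Fq n → ZMod 2} (hf : degLE f 2) :
    bias f ^ 2 ≤ Fintype.card (Fq n) * (linKer f).ncard := by
  classical
  have hterm (b : Fq n) :
      bias (der f b) ≤ if b ∈ linKer f then (Fintype.card (Fq n) : ℝ) else 0 := by
    split_ifs with hb
    · exact bias_le_card _
    · simp only [mem_linKer_iff, not_forall] at hb
      obtain ⟨c, x, hcx⟩ := hb
      refine (bias_eq_zero_of_der_eq_one (c := c) fun y => ?_).le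
      rw [der_der_const_of_degLE_two hf, ← der_der_const_of_degLE_two hf b c x]
      exact Fin.eq_one_of_ne_zero _ hcx
  calc bias f ^ 2 = ∑ b, bias (der f b) := bias_sq f
    _ ≤ ∑ b, if b ∈ linKer f then (Fintype.card (Fq n) : ℝ) else 0 := sum_le_sum fun b _ => hterm b
    _ = Fintype.card (Fq n) * (linKer f).ncard := by
        rw [← sum_filter, sum_const, nsmul_eq_mul, mul_comm, ← Set.ncard_coe_finset]
        simp

lemma exists_degLE_hdist_eq_nl (r : ℕ) (f : Fq n → ZMod 2) :
    ∃ g, degLE g r ∧ hdist f g = nl r f := by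
  obtain ⟨g, hg, hfg⟩ := Nat.sInf_mem
    (s := {d : ℕ | ∃ g : Fq n → ZMod 2, degLE g r ∧ d = hdist f g}) ⟨_, 0, degLE_zero r, rfl⟩
  exact ⟨g, hg, hfg.symm⟩

lemma le_nl_of_forall_bias_le {r : ℕ} {f : Fq n → ZMod 2} {B : ℝ}
    (h : ∀ g, degLE g r → bias (f + g) ≤ B) : (Fintype.card (Fq n) - B) / 2 ≤ nl r f := by
  obtain ⟨g, hg, hfg⟩ := exists_degLE_hdist_eq_nl r f
  have hB := h g hg
  rw [bias_add_eq_card_sub_hdist, hfg] at hB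
  linarith

end BooleanFunctions

section Trace

open Finset

variable {n : ℕ}

lemma tr_add (x y : Fq n) : tr (x + y) = tr x + tr y := map_add _ x y

lemma tr_sq (x : Fq n) : tr (x ^ 2) = tr x := by
  have h := Algebra.trace_eq_of_algEquiv
    (FiniteField.frobeniusAlgEquivOfAlgebraic (ZMod 2) (Fq n)) x
  rwa [FiniteField.coe_frobeniusAlgEquivOfAlgebraic, ZMod.card] at h

lemma tr_pow_four (x : Fq n) : tr (x ^ 4) = tr x := by
  rw [show x ^ 4 = (x ^ 2) ^ 2 by ring, tr_sq, tr_sq]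

lemma tr_sq_add_self (x : Fq n) : tr (x ^ 2 + x) = 0 := by
  rw [tr_add, tr_sq, CharTwo.add_self_eq_zero]

lemma tr_pow_four_add_self (x : Fq n) : tr (x ^ 4 + x) = 0 := by
  rw [tr_add, tr_pow_four, CharTwo.add_self_eq_zero]

lemma forall_tr_pow_four_mul_eq_zero_iff {x : Fq n} : (∀ c, tr (c ^ 4 * x) = 0) ↔ x = 0 := by
  refine ⟨fun h => (traceForm_nondegenerate (ZMod 2) (Fq n)).1 x fun d => ?_, ?_⟩
  · obtain ⟨c, rfl⟩ := (bijective_iterateFrobenius (Fq n) 2 2).2 d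
    rw [Algebra.traceForm_apply, mul_comm]
    simpa [iterateFrobenius_def, tr] using h c
  · rintro rfl c
    rw [mul_zero, tr, map_zero]

lemma bias_tr_pow_le (hn : n ≠ 0) {k : ℕ} (hk : k ≠ 0) :
    bias (fun x : Fq n => tr (x ^ k)) ≤ ((2 ^ n - 1).gcd k - 1) * √(2 ^ n) := by
  let ψ : AddChar (Fq n) ℝ :=
    signChar.compAddMonoidHom (Algebra.trace (ZMod 2) (Fq n)).toAddMonoidHom
  have hψ : ψ.IsPrimitive := by
    obtain ⟨x, hx⟩ := Algebra.trace_surjective (ZMod 2) (Fq n) 1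
    refine AddChar.IsPrimitive.of_ne_one fun h => ?_
    have h1 : signChar (Algebra.trace (ZMod 2) (Fq n) x) = 1 := DFunLike.congr_fun h x
    rw [hx, signChar_one] at h1
    norm_num at h1
  have h := (le_abs_self _).trans (norm_sum_addChar_pow_le hψ hk)
  rw [card_Fq hn] at h
  exact_mod_cast h

end Trace

section Kernel

open Finset

/-- The polynomial in `b` whose roots form the linear kernel of the derivative of `tr (x ^ 7)` in
direction `a`. -/
def kernelForm {F : Type*} [CommRing F] (a b : F) : F :=
  (a ^ 2 * b ^ 4 + a ^ 4 * b ^ 2) ^ 4 + (a * b ^ 4 + a ^ 4 * b) ^ 2 + (a * b ^ 2 + a ^ 2 * b)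

/-- The polynomial through which `kernelForm a b` depends on `y = (b / a) ^ 2 + b / a`; here `c`
stands for `a ^ 7`. -/
def kernelOctic {F : Type*} [CommRing F] (c y : F) : F := c ^ 3 * y ^ 8 + c * (y ^ 4 + y ^ 2) + y

lemma third_derivative_pow_seven {R : Type*} [CommRing R] [CharP R 2] (a b c x : R) :
    x ^ 7 + (x + a) ^ 7 + ((x + b) ^ 7 + (x + b + a) ^ 7) +
        ((x + c) ^ 7 + (x + c + a) ^ 7 + ((x + c + b) ^ 7 + (x + c + b + a) ^ 7)) =
      c * (a ^ 2 * b ^ 4 + a ^ 4 * b ^ 2) + c ^ 2 * (a * b ^ 4 + a ^ 4 * b) +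
        c ^ 4 * (a * b ^ 2 + a ^ 2 * b) := by
  grind [CharTwo.two_eq_zero (R := R)]

section Field

variable {F : Type*} [Field F]

lemma sq_eq_pow_four_add_self_of_roots {c y z : F} (hy : c * y ^ 3 = 1)
    (hz : c ^ 2 * z ^ 4 + c * z = 1) : y ^ 2 = (z / y) ^ 4 + z / y := by
  have hy0 : y ≠ 0 := by rintro rfl; simp at hy
  field_simp
  linear_combination (-y ^ 6) * hz + (z ^ 4 * (c * y ^ 3 + 1) + z * y ^ 3) * hy

lemma card_kernelOctic_le [Fintype F] [DecidableEq F] {c : F} (hc : c ≠ 0) :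
    #{y | kernelOctic c y = 0} ≤ 8 := by
  open Polynomial in
  let p : F[X] := C (c ^ 3) * X ^ 8 + C c * (X ^ 4 + X ^ 2) + X
  have hdeg : p.natDegree = 8 := by simp only [p]; compute_degree!
  have hp : p ≠ 0 := fun h => by simp [h] at hdeg
  have hroots : ({y | kernelOctic c y = 0} : Finset F) ⊆ p.roots.toFinset := fun y hy => by
    rw [Multiset.mem_toFinset, Polynomial.mem_roots hp]
    simpa [p, kernelOctic] using (mem_filter.mp hy).2
  exact (card_le_card hroots).trans
    ((Multiset.toFinset_card_le _).trans (p.card_roots'.trans_eq hdeg))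

variable [CharP F 2]

lemma kernelForm_eq_mul_kernelOctic {a : F} (ha : a ≠ 0) (b : F) :
    kernelForm a b = a ^ 3 * kernelOctic (a ^ 7) ((b / a) ^ 2 + b / a) := by
  have h2 : (2 : F) = 0 := CharTwo.two_eq_zero
  obtain ⟨β, rfl⟩ : ∃ β, b = a * β := ⟨b / a, (mul_div_cancel₀ b ha).symm⟩
  have hsq (x y : F) : (x + y) ^ 2 = x ^ 2 + y ^ 2 := CharTwo.add_sq x y
  have hpow (x : F) : x ^ 4 = (x ^ 2) ^ 2 ∧ x ^ 8 = ((x ^ 2) ^ 2) ^ 2 := by constructor <;> ring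
  rw [mul_div_cancel_left₀ _ ha, kernelForm, kernelOctic]
  simp only [(hpow (_ + _)).1, (hpow (_ + _)).2, hsq]
  linear_combination -a ^ 10 * β ^ 4 * h2

lemma kernelOctic_eq_zero_iff {c y : F} :
    kernelOctic c y = 0 ↔ y = 0 ∨ c * y ^ 3 = 1 ∨ c ^ 2 * y ^ 4 + c * y = 1 := by
  have h2 : (2 : F) = 0 := CharTwo.two_eq_zero
  have hfactor : kernelOctic c y = y * ((c * y ^ 3 - 1) * (c ^ 2 * y ^ 4 + c * y - 1)) := by
    rw [kernelOctic]
    linear_combination (c * y ^ 4 + c * y ^ 2) * h2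
  rw [hfactor, mul_eq_zero, mul_eq_zero, sub_eq_zero, sub_eq_zero]

lemma mul_add_pow_three_eq_one {c y z : F} (hyz : y ≠ z) (hy : c ^ 2 * y ^ 4 + c * y = 1)
    (hz : c ^ 2 * z ^ 4 + c * z = 1) : c * (y + z) ^ 3 = 1 := by
  have h2 : (2 : F) = 0 := CharTwo.two_eq_zero
  have hc : c ≠ 0 := by rintro rfl; simp at hy
  have hsum : y + z ≠ 0 := fun h => hyz (CharTwo.add_eq_zero.mp h)
  apply mul_left_cancel₀ (mul_ne_zero hc hsum)
  have h4 : (y + z) ^ 4 = y ^ 4 + z ^ 4 := by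
    linear_combination (2 * y ^ 3 * z + 3 * y ^ 2 * z ^ 2 + 2 * y * z ^ 3) * h2
  linear_combination c ^ 2 * h4 + hy + hz - (c * y + c * z - 1) * h2

lemma eq_add_of_pow_three_eq {y z v : F} (hy : y ^ 3 = v ^ 3) (hz : z ^ 3 = v ^ 3) (hyz : y ≠ z)
    (hvy : v ≠ y) (hvz : v ≠ z) : v = y + z := by
  have h2 : (2 : F) = 0 := CharTwo.two_eq_zero
  apply mul_left_cancel₀ (sub_ne_zero.mpr hyz)
  have hy' : y ^ 2 + y * v + v ^ 2 = 0 :=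
    mul_left_cancel₀ (sub_ne_zero.mpr hvy) (by linear_combination -hy)
  have hz' : z ^ 2 + z * v + v ^ 2 = 0 :=
    mul_left_cancel₀ (sub_ne_zero.mpr hvz) (by linear_combination -hz)
  linear_combination hz' - hy' + (y - z) * v * h2

lemma card_filter_sq_add_self_eq_le_two [DecidableEq F] {a : F} (ha : a ≠ 0) (y : F)
    (s : Finset F) :
    #{b ∈ s | (b / a) ^ 2 + b / a = y} ≤ 2 := by
  have h2 : (2 : F) = 0 := CharTwo.two_eq_zero
  obtain hempty | ⟨b₀, hb₀⟩ := ({b ∈ s | (b / a) ^ 2 + b / a = y}).eq_empty_or_nonempty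
  · simp [hempty]
  · refine (card_le_card fun b hb => ?_).trans (card_le_two (a := b₀) (b := b₀ + a))
    have h := ((mem_filter.mp hb).2).trans (mem_filter.mp hb₀).2.symm
    have hprod : (b - b₀) * (b - (b₀ + a)) = 0 := by
      field_simp at h
      linear_combination h + (b₀ ^ 2 + b₀ * a - b * b₀ - b * a) * h2
    rw [mem_insert, mem_singleton]
    exact (mul_eq_zero.mp hprod).imp sub_eq_zero.mp sub_eq_zero.mp

end Field

variable {n : ℕ}

/-- Some `y` satisfies `c * y ^ 3 = 1`, and all such `y` have trace zero. For `c = a ^ 7` this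
describes the directions `a` in which the derivative of `tr (x ^ 7)` may have a linear kernel of
size `16` instead of at most `4`. -/
def TracelessCubeRoots (c : Fq n) : Prop := (∃ y, c * y ^ 3 = 1) ∧ ∀ y, c * y ^ 3 = 1 → tr y = 0

instance : DecidablePred (TracelessCubeRoots (n := n)) := Classical.decPred _

lemma tracelessCubeRoots_of_roots {c y z : Fq n} (hy : c * y ^ 3 = 1)
    (hz : c ^ 2 * z ^ 4 + c * z = 1) : TracelessCubeRoots c := by
  refine ⟨⟨y, hy⟩, fun v hv => ?_⟩
  rw [← tr_sq, sq_eq_pow_four_add_self_of_roots hv hz, tr_pow_four_add_self]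

lemma tracelessCubeRoots_of_tr_eq_zero {c y z : Fq n} (hyz : y ≠ z) (hy : c * y ^ 3 = 1)
    (hz : c * z ^ 3 = 1) (hty : tr y = 0) (htz : tr z = 0) : TracelessCubeRoots c := by
  refine ⟨⟨y, hy⟩, fun v hv => ?_⟩
  have hc : c ≠ 0 := left_ne_zero_of_mul_eq_one hy
  by_cases hvy : v = y
  · rwa [hvy]
  by_cases hvz : v = z
  · rwa [hvz]
  rw [eq_add_of_pow_three_eq (mul_left_cancel₀ hc (hy.trans hv.symm))
    (mul_left_cancel₀ hc (hz.trans hv.symm)) hyz hvy hvz, tr_add, hty, htz, add_zero]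

lemma tracelessCubeRoots_of_kernelOctic {c y z : Fq n} (hyz : y ≠ z) (hy0 : y ≠ 0) (hz0 : z ≠ 0)
    (hy : kernelOctic c y = 0) (hz : kernelOctic c z = 0) (hty : tr y = 0) (htz : tr z = 0) :
    TracelessCubeRoots c := by
  rcases (kernelOctic_eq_zero_iff.mp hy).resolve_left hy0 with hy | hy <;>
    rcases (kernelOctic_eq_zero_iff.mp hz).resolve_left hz0 with hz | hz
  · exact tracelessCubeRoots_of_tr_eq_zero hyz hy hz hty htz
  · exact tracelessCubeRoots_of_roots hy hz
  · exact tracelessCubeRoots_of_roots hz hy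
  · exact tracelessCubeRoots_of_roots (mul_add_pow_three_eq_one hyz hy hz) hz

lemma card_kernelOctic_tr_le_two {c : Fq n} (hc : ¬ TracelessCubeRoots c) :
    #{y | kernelOctic c y = 0 ∧ tr y = 0} ≤ 2 := by
  set s : Finset (Fq n) := {y | kernelOctic c y = 0 ∧ tr y = 0} with hs
  suffices h : #(s.erase 0) ≤ 1 by
    have := s.pred_card_le_card_erase (a := 0)
    omega
  refine card_le_one.mpr fun y hy z hz => ?_
  simp only [hs, mem_erase, mem_filter_univ] at hy hz
  by_contra hyz
  exact hc (tracelessCubeRoots_of_kernelOctic hyz hy.1 hz.1 hy.2.1 hz.2.1 hy.2.2 hz.2.2)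

lemma card_kernelForm_le_two_mul {a : Fq n} (ha : a ≠ 0) :
    #{b | kernelForm a b = 0} ≤ 2 * #{y | kernelOctic (a ^ 7) y = 0 ∧ tr y = 0} := by
  refine card_le_mul_card_image_of_maps_to (f := fun b => (b / a) ^ 2 + b / a) (fun b hb => ?_) 2
    fun y _ => card_filter_sq_add_self_eq_le_two ha y _
  have h : kernelForm a b = 0 := by simpa using hb
  rw [kernelForm_eq_mul_kernelOctic ha, mul_eq_zero_iff_left (pow_ne_zero 3 ha)] at h
  simpa [tr_sq_add_self] using h

lemma card_kernelForm_le_sixteen {a : Fq n} (ha : a ≠ 0) : #{b | kernelForm a b = 0} ≤ 16 := by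
  have h8 := card_kernelOctic_le (pow_ne_zero 7 ha)
  have htr : #{y | kernelOctic (a ^ 7) y = 0 ∧ tr y = 0} ≤ #{y | kernelOctic (a ^ 7) y = 0} :=
    card_le_card (monotone_filter_right _ fun _ _ h => h.1)
  linarith [card_kernelForm_le_two_mul ha]

lemma card_kernelForm_le_four {a : Fq n} (ha : a ≠ 0) (hT : ¬ TracelessCubeRoots (a ^ 7)) :
    #{b | kernelForm a b = 0} ≤ 4 := by
  linarith [card_kernelForm_le_two_mul ha, card_kernelOctic_tr_le_two hT]

end Kernel

section TracePowSeven

open Finset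

/-- The Boolean function `x ↦ tr (x ^ 7)` on `Fq n`. -/
def trPowSeven (n : ℕ) : Fq n → ZMod 2 := fun x => tr (x ^ 7)

variable {n : ℕ}

lemma der_der_der_trPowSeven (a b c x : Fq n) :
    der (der (der (trPowSeven n) a) b) c x = tr (c ^ 4 * kernelForm a b) := by
  simp only [der, trPowSeven, ← tr_add]
  rw [third_derivative_pow_seven, tr_add, tr_add, ← tr_pow_four (c * _), ← tr_sq (c ^ 2 * _),
    ← tr_add, ← tr_add, kernelForm]
  congr 1
  ring

lemma linKer_der_trPowSeven_add {g : Fq n → ZMod 2} (hg : degLE g 2) (a : Fq n) :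
    linKer (der (trPowSeven n + g) a) = {b | kernelForm a b = 0} := by
  ext b
  have hg0 (c : Fq n) : der (der (der g a) b) c = 0 := hg [c, b, a] rfl
  simp only [mem_linKer_iff, der_add, hg0, add_zero, der_der_der_trPowSeven, forall_const,
    forall_tr_pow_four_mul_eq_zero_iff, Set.mem_ofPred_eq]

lemma degLE_trPowSeven : degLE (trPowSeven n) 3
  | [d, c, b, a], _ => by
    funext x
    rw [derIter, der]
    simp only [derIter, der_der_der_trPowSeven, CharTwo.add_self_eq_zero]

lemma bias_der_trPowSeven_add_le (hn : n ≠ 0) {g : Fq n → ZMod 2} (hg : degLE g 2) (a : Fq n)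
    {m : ℕ} (hm : #{b | kernelForm a b = 0} ≤ m ^ 2) :
    bias (der (trPowSeven n + g) a) ≤ m * √(2 ^ n) := by
  have h := bias_sq_le_card_mul_ncard_linKer
    (degLE_der (degLE_add degLE_trPowSeven (degLE_succ hg)) a)
  rw [linKer_der_trPowSeven_add hg, ← coe_filter_univ, Set.ncard_coe_finset, card_Fq hn] at h
  refine le_of_abs_le (abs_le_of_sq_le_sq (h.trans ?_) (by positivity))
  have hm' : (#{b | kernelForm a b = 0} : ℝ) ≤ m ^ 2 := by exact_mod_cast hm
  rw [mul_pow, Real.sq_sqrt (by positivity), mul_comm]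
  push_cast
  gcongr

lemma gcd_two_pow_sub_one_three (hev : Even n) : (2 ^ n - 1).gcd 3 = 3 := by
  simpa [Nat.gcd_eq_right hev.two_dvd] using Nat.pow_sub_one_gcd_pow_sub_one 2 n 2

lemma gcd_two_pow_sub_one_seven : (2 ^ n - 1).gcd 7 = if 3 ∣ n then 7 else 1 := by
  have h := Nat.pow_sub_one_gcd_pow_sub_one 2 n 3
  split_ifs with h3
  · simpa [Nat.gcd_eq_right h3] using h
  · rw [← Nat.Prime.coprime_iff_not_dvd Nat.prime_three, Nat.coprime_comm] at h3
    simpa [h3.gcd_eq_one] using h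

lemma card_filter_pow_three_eq (hn : n ≠ 0) (hev : Even n) {e : Fq n} (he : e ≠ 0) :
    #{x : Fq n | x ^ 3 = e ^ 3} = 3 := by
  rw [card_filter_pow_eq_pow_of_ne_zero he three_ne_zero, card_Fq hn,
    gcd_two_pow_sub_one_three hev]

lemma exists_sq_add_self_add_one_eq_zero (hn : n ≠ 0) (hev : Even n) :
    ∃ w : Fq n, w ^ 2 + w + 1 = 0 := by
  have hcard := card_filter_pow_eq_pow_of_ne_zero (one_ne_zero (α := Fq n)) three_ne_zero
  rw [card_Fq hn, gcd_two_pow_sub_one_three hev] at hcard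
  obtain ⟨w, hw, hw1⟩ := exists_mem_ne (by rw [hcard]; norm_num) (1 : Fq n)
  have hw3 : w ^ 3 = 1 := by simpa using hw
  exact ⟨w, mul_left_cancel₀ (sub_ne_zero.mpr hw1) (by linear_combination hw3)⟩

lemma bias_tr_mul_pow_seven {v : Fq n} (hv : v ≠ 0) (hv7 : v ^ 7 = v) :
    bias (fun x => tr (v * x ^ 7)) = bias (trPowSeven n) := by
  rw [bias, bias, ← Equiv.sum_comp (Equiv.mulLeft₀ v hv) fun x => signChar (trPowSeven n x)]
  refine sum_congr rfl fun x _ => ?_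
  rw [Equiv.mulLeft₀_apply, trPowSeven, mul_pow, hv7]

lemma four_mul_card_tr_eq_zero_and (hn : n ≠ 0) {w : Fq n} (hw : w ^ 2 + w + 1 = 0) :
    4 * (#{e : Fq n | tr (e ^ 7) = 0 ∧ tr (w * e ^ 7) = 0} : ℝ) =
      2 ^ n + 3 * bias (trPowSeven n) := by
  have h2 : (2 : Fq n) = 0 := CharTwo.two_eq_zero
  have hw0 : w ≠ 0 := by rintro rfl; simp at hw
  have hw3 : w ^ 3 = 1 := by linear_combination (w - 1) * hw
  have hindicator (z v : ZMod 2) : 4 * (if z = 0 ∧ v = 0 then (1 : ℝ) else 0) =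
      1 + signChar z + signChar v + signChar (z + v) := by
    rw [AddChar.map_add_eq_mul, signChar_eq_ite, signChar_eq_ite, ite_and]
    split_ifs <;> norm_num
  have hadd (x : Fq n) : tr (x ^ 7) + tr (w * x ^ 7) = tr (w ^ 2 * x ^ 7) := by
    rw [← tr_add]
    congr 1
    linear_combination -x ^ 7 * hw + (w + 1) * x ^ 7 * h2
  have hw7 := bias_tr_mul_pow_seven hw0 (by linear_combination (w ^ 4 + w) * hw3)
  have hw14 := bias_tr_mul_pow_seven (pow_ne_zero 2 hw0)
    (by linear_combination (w ^ 11 + w ^ 8 + w ^ 5 + w ^ 2) * hw3)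
  calc 4 * (#{e : Fq n | tr (e ^ 7) = 0 ∧ tr (w * e ^ 7) = 0} : ℝ)
      = ∑ x : Fq n, (1 + signChar (tr (x ^ 7)) + signChar (tr (w * x ^ 7)) +
          signChar (tr (w ^ 2 * x ^ 7))) := by
        simp only [← sum_boole, mul_sum, hindicator, hadd]
    _ = 2 ^ n + bias (trPowSeven n) + bias (fun x : Fq n => tr (w * x ^ 7)) +
          bias (fun x : Fq n => tr (w ^ 2 * x ^ 7)) := by
        rw [sum_add_distrib, sum_add_distrib, sum_add_distrib, sum_const, card_univ, card_Fq hn,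
          nsmul_one, Nat.cast_pow, Nat.cast_ofNat]
        rfl
    _ = 2 ^ n + 3 * bias (trPowSeven n) := by
        rw [hw7, hw14]
        ring

lemma three_mul_card_tracelessCubeRoots_lt (hn : n ≠ 0) (hev : Even n) {w : Fq n}
    (hw : w ^ 2 + w + 1 = 0) :
    3 * #{a : Fq n | TracelessCubeRoots (a ^ 7)} <
      #{e : Fq n | tr (e ^ 7) = 0 ∧ tr (w * e ^ 7) = 0} := by
  have hw3 : w ^ 3 = 1 := by linear_combination (w - 1) * hw
  set A : Finset (Fq n) := {a | TracelessCubeRoots (a ^ 7)}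
  set E : Finset (Fq n) := {e | tr (e ^ 7) = 0 ∧ tr (w * e ^ 7) = 0}
  have hE0 : 0 ∈ E := mem_filter.mpr ⟨mem_univ _, by simp [tr]⟩
  have habove : ∀ a ∈ A, 3 ≤ #((E.erase 0).bipartiteAbove (fun a e => a * e ^ 3 = 1) a) := by
    intro a ha
    obtain ⟨⟨y, hy⟩, htr⟩ := (mem_filter.mp ha).2
    have hy' : a * (a ^ 2 * y) ^ 3 = 1 := by linear_combination hy
    have he0 : a ^ 2 * y ≠ 0 := fun h => by simp [h] at hy'
    refine (card_filter_pow_three_eq hn hev he0).ge.trans ?_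
    refine card_le_card fun e he => ?_
    have hae : a * e ^ 3 = 1 := by rw [(mem_filter.mp he).2, hy']
    have hroot {v : Fq n} (hv : v ^ 3 = 1) : a ^ 7 * (v * e ^ 7) ^ 3 = 1 := by
      calc a ^ 7 * (v * e ^ 7) ^ 3 = (a * e ^ 3) ^ 7 * v ^ 3 := by ring
        _ = 1 := by rw [hae, hv, one_pow, one_mul]
    refine (mem_bipartiteAbove _).mpr ⟨mem_erase.mpr ⟨?_, mem_filter.mpr ⟨mem_univ e, ?_, ?_⟩⟩, hae⟩
    · rintro rfl
      simp at hae
    · simpa using htr _ (hroot (one_pow 3))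
    · exact htr _ (hroot hw3)
  have hbelow : ∀ e ∈ E.erase 0, #(A.bipartiteBelow (fun a e => a * e ^ 3 = 1) e) ≤ 1 := by
    intro e he
    have he3 := pow_ne_zero 3 (ne_of_mem_erase he)
    refine card_le_one.mpr fun a ha a' ha' => mul_right_cancel₀ he3 ?_
    rw [((mem_bipartiteBelow _).mp ha).2, ((mem_bipartiteBelow _).mp ha').2]
  have hcount := card_mul_le_card_mul _ habove hbelow
  have herase := card_erase_lt_of_mem hE0
  omega

lemma twelve_mul_card_tracelessCubeRoots_le (hn : n ≠ 0) (hev : Even n) :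
    12 * (#{a : Fq n | TracelessCubeRoots (a ^ 7)} : ℝ) ≤
      2 ^ n + 3 * bias (trPowSeven n) - 4 := by
  obtain ⟨w, hw⟩ := exists_sq_add_self_add_one_eq_zero hn hev
  have hlt := Nat.succ_le_of_lt (three_mul_card_tracelessCubeRoots_lt hn hev hw)
  rify at hlt
  linarith [four_mul_card_tr_eq_zero_and hn hw]

lemma bias_trPowSeven_add_sq_le (hn : n ≠ 0) {g : Fq n → ZMod 2} (hg : degLE g 2) :
    bias (trPowSeven n + g) ^ 2 ≤
      2 ^ n + 2 * √(2 ^ n) * (2 ^ n - 1 + #{a : Fq n | TracelessCubeRoots (a ^ 7)}) := by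
  set Q : ℝ := √(2 ^ n)
  have hterm (a : Fq n) : bias (der (trPowSeven n + g) a) ≤
      2 * Q + (if TracelessCubeRoots (a ^ 7) then 2 * Q else 0) +
        if a = 0 then 2 ^ n - 2 * Q else 0 := by
    obtain rfl | ha := eq_or_ne a 0
    · have hT : ¬ TracelessCubeRoots ((0 : Fq n) ^ 7) := by
        simp [TracelessCubeRoots]
      have hcard := bias_le_card (der (trPowSeven n + g) 0)
      rw [card_Fq hn] at hcard
      rw [if_neg hT, if_pos rfl]
      push_cast at hcard
      linarith
    · rw [if_neg ha, add_zero]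
      split_ifs with hT
      · have h := bias_der_trPowSeven_add_le hn hg a (m := 4) (card_kernelForm_le_sixteen ha)
        push_cast at h
        linarith
      · have h := bias_der_trPowSeven_add_le hn hg a (m := 2) (card_kernelForm_le_four ha hT)
        push_cast at h
        linarith
  calc bias (trPowSeven n + g) ^ 2 = ∑ a, bias (der (trPowSeven n + g) a) := bias_sq _
    _ ≤ _ := sum_le_sum fun a _ => hterm a
    _ = 2 ^ n + 2 * Q * (2 ^ n - 1 + #{a : Fq n | TracelessCubeRoots (a ^ 7)}) := by
      rw [sum_add_distrib, sum_add_distrib, sum_const, card_univ, card_Fq hn, ← sum_filter,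
        sum_const, sum_ite_eq' univ (0 : Fq n), if_pos (mem_univ _)]
      push_cast [nsmul_eq_mul]
      ring

theorem le_nl_two_trPowSeven (hn : n ≠ 0) (hev : Even n) :
    2 ^ n / 2 - 1 / 2 * √(13 / 6 * √(2 ^ n) ^ 3 + ((2 ^ n - 1).gcd 7 + 1) / 2 * √(2 ^ n) ^ 2 -
      8 / 3 * √(2 ^ n)) ≤ (nl 2 (trPowSeven n) : ℝ) := by
  set Q : ℝ := √(2 ^ n) with hQ
  have hQ0 : 0 ≤ Q := Real.sqrt_nonneg _
  have hQ_sq : Q ^ 2 = 2 ^ n := Real.sq_sqrt (by positivity)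
  have hWeil : bias (trPowSeven n) ≤ ((2 ^ n - 1).gcd 7 - 1) * Q := bias_tr_pow_le hn (by norm_num)
  have hcount := twelve_mul_card_tracelessCubeRoots_le hn hev
  have hnl := le_nl_of_forall_bias_le (r := 2) (f := trPowSeven n) fun g hg => Real.le_sqrt_of_sq_le
    (y := 13 / 6 * Q ^ 3 + ((2 ^ n - 1).gcd 7 + 1) / 2 * Q ^ 2 - 8 / 3 * Q) ?_
  · rw [card_Fq hn] at hnl
    push_cast at hnl
    linarith
  · refine (bias_trPowSeven_add_sq_le hn hg).trans ?_
    rw [← hQ_sq] at hcount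
    rw [← hQ, ← hQ_sq]
    linarith [mul_le_mul_of_nonneg_left hcount hQ0, mul_le_mul_of_nonneg_left hWeil hQ0]

end TracePowSeven

/-- Second-order nonlinearity lower bound for `tr(x^7)`, even `n`. -/
theorem second_order_nl_tr_x7_even (n : ℕ) (hn : 0 < n) (hev : Even n)
    (f : Fq n → ZMod 2) (hf : ∀ x, f x = tr (x ^ 7)) :
    (¬ (3 ∣ n) →
      (nl 2 f : ℝ) ≥ (2:ℝ) ^ ((n:ℝ) - 1) - (1/2) * Real.sqrt
        ((13/3) * (2:ℝ) ^ (3 * (n:ℝ) / 2 - 1) + (2:ℝ) ^ (n:ℝ)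
          - (1/3) * (2:ℝ) ^ ((n:ℝ) / 2 + 3))) ∧
    ((3 ∣ n) →
      (nl 2 f : ℝ) ≥ (2:ℝ) ^ ((n:ℝ) - 1) - (1/2) * Real.sqrt
        ((13/3) * (2:ℝ) ^ (3 * (n:ℝ) / 2 - 1) + (2:ℝ) ^ ((n:ℝ) + 2)
          - (1/3) * (2:ℝ) ^ ((n:ℝ) / 2 + 3))) := by
  obtain rfl : f = trPowSeven n := funext hf
  have hnl := le_nl_two_trPowSeven hn.ne' hev
  have hsqrt : (2 : ℝ) ^ ((n : ℝ) / 2) = √(2 ^ n) := by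
    rw [div_eq_mul_one_div, Real.rpow_natCast_mul zero_le_two, Real.sqrt_eq_rpow]
  have hcube : (2 : ℝ) ^ (3 * (n : ℝ) / 2 - 1) = √(2 ^ n) ^ 3 / 2 := by
    rw [Real.rpow_sub_one two_ne_zero, ← hsqrt, ← Real.rpow_mul_natCast zero_le_two]
    congr 2
    push_cast
    ring
  rw [ge_iff_le, ge_iff_le, hcube, Real.rpow_sub_one two_ne_zero, Real.rpow_add zero_lt_two, hsqrt,
    Real.rpow_add zero_lt_two, Real.rpow_natCast]
  rw [gcd_two_pow_sub_one_seven, Real.sq_sqrt (by positivity)] at hnl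
  constructor
  · intro h3
    rw [if_neg h3] at hnl
    convert hnl using 4
    norm_num; ring
  · intro h3
    rw [if_pos h3] at hnl
    convert hnl using 4
    norm_num; ring
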